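/- Let c₁, …, c₆ ∈ ℝ, let L(x,y,p,q) = c₁ + c₂x + c₃y + c₄p + c₅q + c₆(xp + yq), let U ⊆ ℝ⁴ be a nonempty open set on which L ≠ 0, and let D = L⁻² on U. Then the scalar curvature R of the reduced Lychagin–Rubtsov metric G_D (computed from the coordinate Christoffel symbols, Riemann tensor, Ricci tensor and trace with the inverse metric) is the constant ±24 (c₂c₄ + c₃c₅ − c₁c₆) on U; in particular, R vanishes identically on U if and only if c₂c₄ + c₃c₅ − c₁c₆ = 0. -/

import Mathlib

/-- Partial derivative of `f : ℝ⁴ → ℝ` in the `i`-th coordinate direction. -/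
noncomputable def pd (i : Fin 4) (f : (Fin 4 → ℝ) → ℝ) (u : Fin 4 → ℝ) : ℝ :=
  fderiv ℝ f u (Pi.single i 1)

/-- Christoffel symbols `Γᵏᵢⱼ` of a matrix-valued metric `g` in coordinates. -/
noncomputable def christoffel (g : (Fin 4 → ℝ) → Matrix (Fin 4) (Fin 4) ℝ)
    (k i j : Fin 4) (u : Fin 4 → ℝ) : ℝ :=
  (1 / 2) * ∑ l, (g u)⁻¹ k l *
    (pd i (fun v => g v j l) u + pd j (fun v => g v i l) u - pd l (fun v => g v i j) u)

/-- Curvature tensor `Rˡᵢⱼₖ` of a matrix-valued metric `g` in coordinates. -/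
noncomputable def riemann (g : (Fin 4 → ℝ) → Matrix (Fin 4) (Fin 4) ℝ)
    (l i j k : Fin 4) (u : Fin 4 → ℝ) : ℝ :=
  pd j (christoffel g l i k) u - pd k (christoffel g l i j) u +
    ∑ m, (christoffel g l j m u * christoffel g m i k u -
          christoffel g l k m u * christoffel g m i j u)

/-- Ricci tensor `Ricᵢₖ = Σₗ Rˡᵢₗₖ`. -/
noncomputable def ricci (g : (Fin 4 → ℝ) → Matrix (Fin 4) (Fin 4) ℝ)
    (i k : Fin 4) (u : Fin 4 → ℝ) : ℝ :=
  ∑ l, riemann g l i l k u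

/-- Scalar curvature `R = Σᵢₖ (g⁻¹)ⁱᵏ Ricᵢₖ`. -/
noncomputable def scalarCurv (g : (Fin 4 → ℝ) → Matrix (Fin 4) (Fin 4) ℝ)
    (u : Fin 4 → ℝ) : ℝ :=
  ∑ i, ∑ k, (g u)⁻¹ i k * ricci g i k u

/-- The reduced Lychagin–Rubtsov metric associated with `D : ℝ⁴ → ℝ`. -/
noncomputable def GD (D : (Fin 4 → ℝ) → ℝ) (u : Fin 4 → ℝ) :
    Matrix (Fin 4) (Fin 4) ℝ :=
  !![0, 0, D u, 0;
     0, 0, 0, D u;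
     D u, 0, 0, 0;
     0, D u, 0, 0]

/-!
For a constant metric `η` in dimension `n` and a nonvanishing function `L`, the Christoffel symbols
of `L⁻² η` are linear in `θ = -dL / L`, and contracting the curvature gives the conformal formula
`R = 2 (n - 1) L ΔL - n (n - 1) |dL|²`, with `Δ` and `|·|` taken with respect to `η`. If `L` is a
quadratic polynomial whose Hessian is a multiple `k η` of the metric, then `ΔL = n k`, and the terms
of `|dL|²` depending on the point are cancelled by those of `L ΔL`: with `c` the value and `b` the
differential of `L` at the origin, `R = n (n - 1) (2 c k - |b|²)`. The metric `G_D` is the case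
`η = 2 (dx dp + dy dq)`, `n = 4`, for which the Hessian of `L` is `c₆ η`.
-/

open Matrix Filter Topology

section ConformalSymbol

variable {ι R : Type*} [Fintype ι] [DecidableEq ι] [CommRing R] {η : Matrix ι ι R}

/-- The symbols `δᵏⱼ θᵢ + δᵏᵢ θⱼ - ηᵢⱼ ηᵏˡ θₗ`, by which the Levi-Civita connection of `η` changes
when `η` is rescaled by `e^{2φ}` with `θ = dφ`. They are bundled as a linear map in the covector `θ`
so that differentiating them amounts to differentiating `θ`. -/
noncomputable def conformalSymbol (η : Matrix ι ι R) (k i j : ι) : (ι → R) →ₗ[R] R :=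
  (1 : Matrix ι ι R) k j • LinearMap.proj i + (1 : Matrix ι ι R) k i • LinearMap.proj j -
    η i j • LinearMap.proj k ∘ₗ η⁻¹.mulVecLin

lemma conformalSymbol_apply (η : Matrix ι ι R) (k i j : ι) (θ : ι → R) :
    conformalSymbol η k i j θ = (1 : Matrix ι ι R) k j * θ i + (1 : Matrix ι ι R) k i * θ j -
      η i j * (η⁻¹ *ᵥ θ) k := rfl

lemma sum_one_apply_mul (i : ι) (f : ι → R) : ∑ l, (1 : Matrix ι ι R) i l * f l = f i :=
  congrFun (one_mulVec f) i

lemma sum_mul_inv_mulVec (hdet : IsUnit η.det) (θ : ι → R) (i : ι) :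
    ∑ l, η i l * (η⁻¹ *ᵥ θ) l = θ i := by
  change (η *ᵥ (η⁻¹ *ᵥ θ)) i = θ i
  rw [mulVec_mulVec, mul_nonsing_inv η hdet, one_mulVec]

lemma sum_conformalSymbol_divergence (η A : Matrix ι ι R) (i k : ι) :
    ∑ l, conformalSymbol η l i k (A.col l) = A i k + A k i - η i k * (η⁻¹ * A).trace := by
  simp only [conformalSymbol_apply, Finset.sum_sub_distrib, Finset.sum_add_distrib,
    ← Finset.mul_sum, one_apply, ite_mul, one_mul, zero_mul, Finset.sum_ite_eq', Finset.mem_univ,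
    if_true, col_apply]
  rfl

lemma sum_conformalSymbol_trace (hdet : IsUnit η.det) (θ : ι → R) (i : ι) :
    ∑ l, conformalSymbol η l i l θ = Fintype.card ι * θ i := by
  simp [conformalSymbol_apply, Finset.sum_add_distrib, one_apply, sum_mul_inv_mulVec hdet]

lemma conformalSymbol_symm (hη : η.IsSymm) (k i j : ι) (θ : ι → R) :
    conformalSymbol η k i j θ = conformalSymbol η k j i θ := by
  rw [conformalSymbol_apply, conformalSymbol_apply, hη.apply i j]
  ring

lemma sum_conformalSymbol_mul (η : Matrix ι ι R) (θ : ι → R) (i k : ι) :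
    ∑ m, θ m * conformalSymbol η m i k θ = 2 * (θ i * θ k) - η i k * (θ ⬝ᵥ η⁻¹ *ᵥ θ) := by
  have hterm (m : ι) : θ m * conformalSymbol η m i k θ =
      (1 : Matrix ι ι R) k m * (θ i * θ m) + (1 : Matrix ι ι R) i m * (θ k * θ m) -
        η i k * (θ m * (η⁻¹ *ᵥ θ) m) := by
    rw [conformalSymbol_apply, isSymm_one.apply k m, isSymm_one.apply i m]
    ring
  simp only [hterm, Finset.sum_sub_distrib, Finset.sum_add_distrib, sum_one_apply_mul,
    ← Finset.mul_sum, dotProduct]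
  ring

lemma sum_sharp_mul_conformalSymbol (hdet : IsUnit η.det) (θ : ι → R) (m i : ι) :
    ∑ l, (η⁻¹ *ᵥ θ) l * conformalSymbol η m i l θ =
      (1 : Matrix ι ι R) m i * (θ ⬝ᵥ η⁻¹ *ᵥ θ) := by
  have hterm (l : ι) : (η⁻¹ *ᵥ θ) l * conformalSymbol η m i l θ =
      (1 : Matrix ι ι R) m l * (θ i * (η⁻¹ *ᵥ θ) l) +
        (1 : Matrix ι ι R) m i * (θ l * (η⁻¹ *ᵥ θ) l) -
        (η⁻¹ *ᵥ θ) m * (η i l * (η⁻¹ *ᵥ θ) l) := by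
    rw [conformalSymbol_apply]
    ring
  simp only [hterm, Finset.sum_sub_distrib, Finset.sum_add_distrib, ← Finset.mul_sum,
    sum_one_apply_mul, sum_mul_inv_mulVec hdet, dotProduct]
  ring

lemma sum_conformalSymbol_mul_conformalSymbol (hη : η.IsSymm) (hdet : IsUnit η.det)
    (θ : ι → R) (i k : ι) :
    ∑ l, ∑ m, conformalSymbol η l k m θ * conformalSymbol η m i l θ =
      (Fintype.card ι + 2) * (θ i * θ k) - 2 * (η i k * (θ ⬝ᵥ η⁻¹ *ᵥ θ)) := by
  have hterm (l m : ι) : conformalSymbol η l k m θ * conformalSymbol η m i l θ =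
      (1 : Matrix ι ι R) l m * (θ k * conformalSymbol η m i l θ) +
        (1 : Matrix ι ι R) k l * (θ m * conformalSymbol η m i l θ) -
        η k m * ((η⁻¹ *ᵥ θ) l * conformalSymbol η m i l θ) := by
    rw [conformalSymbol_apply η l, isSymm_one.apply k l]
    ring
  have hsharp : ∑ l, ∑ m, η k m * ((η⁻¹ *ᵥ θ) l * conformalSymbol η m i l θ) =
      η k i * (θ ⬝ᵥ η⁻¹ *ᵥ θ) := by
    rw [Finset.sum_comm]
    simp only [← Finset.mul_sum, sum_sharp_mul_conformalSymbol hdet]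
    simp [one_apply]
  simp only [hterm, Finset.sum_sub_distrib, Finset.sum_add_distrib, hsharp]
  simp only [sum_one_apply_mul, ← Finset.mul_sum, sum_conformalSymbol_trace hdet,
    sum_conformalSymbol_mul, hη.apply i k]
  ring

end ConformalSymbol

section CoordinateCalculus

variable {f : (Fin 4 → ℝ) → ℝ} {θ ψ : (Fin 4 → ℝ) → Fin 4 → ℝ} {u : Fin 4 → ℝ}

/-- The differential of `f` in coordinates, as the covector `(∂ᵢ f)ᵢ`; no index is raised. -/
noncomputable def coordGrad (f : (Fin 4 → ℝ) → ℝ) (u : Fin 4 → ℝ) : Fin 4 → ℝ :=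
  fun i => pd i f u

/-- The Jacobian matrix of `θ`, with entry `∂ⱼ θᵢ` in row `i` and column `j`. The Hessian of `f` is
`coordJacobian (coordGrad f)`. -/
noncomputable def coordJacobian (θ : (Fin 4 → ℝ) → Fin 4 → ℝ) (u : Fin 4 → ℝ) :
    Matrix (Fin 4) (Fin 4) ℝ :=
  of fun i j => pd j (fun v => θ v i) u

lemma pd_congr {g : (Fin 4 → ℝ) → ℝ} (h : f =ᶠ[𝓝 u] g) (i : Fin 4) :
    pd i f =ᶠ[𝓝 u] pd i g :=
  h.fderiv.mono fun _ hv => DFunLike.congr_fun hv (Pi.single i 1)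

lemma coordJacobian_congr (h : θ =ᶠ[𝓝 u] ψ) : coordJacobian θ u = coordJacobian ψ u := by
  ext i j
  exact (pd_congr (h.mono fun v hv => congrFun hv i) j).eq_of_nhds

lemma pd_linearMap_comp (hθ : DifferentiableAt ℝ θ u) (ℓ : (Fin 4 → ℝ) →ₗ[ℝ] ℝ) (i : Fin 4) :
    pd i (fun v => ℓ (θ v)) u = ℓ ((coordJacobian θ u).col i) := by
  have hcol : (coordJacobian θ u).col i = fderiv ℝ θ u (Pi.single i 1) := by
    ext m
    simp only [col_apply, coordJacobian, of_apply, pd]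
    rw [fderiv_apply hθ]
    rfl
  have hcomp := ((LinearMap.toContinuousLinearMap ℓ).hasFDerivAt.comp u hθ.hasFDerivAt).fderiv
  rw [hcol, pd]
  exact DFunLike.congr_fun hcomp (Pi.single i 1)

lemma coordGrad_comp {φ : ℝ → ℝ} {φ' : ℝ} (hφ : HasDerivAt φ φ' (f u))
    (hf : DifferentiableAt ℝ f u) : coordGrad (fun v => φ (f v)) u = φ' • coordGrad f u := by
  ext i
  exact DFunLike.congr_fun (hφ.comp_hasFDerivAt u hf.hasFDerivAt).fderiv (Pi.single i 1)

lemma coordJacobian_smul (hf : DifferentiableAt ℝ f u) (hθ : DifferentiableAt ℝ θ u) :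
    coordJacobian (fun v => f v • θ v) u =
      f u • coordJacobian θ u + vecMulVec (θ u) (coordGrad f u) := by
  ext i j
  simp only [coordJacobian, of_apply, Pi.smul_apply, smul_eq_mul, pd, Matrix.add_apply,
    Matrix.smul_apply, vecMulVec_apply, coordGrad]
  rw [fderiv_fun_mul hf (differentiableAt_pi.1 hθ i)]
  simp

lemma differentiableAt_coordGrad (hf : ContDiffAt ℝ 2 f u) :
    DifferentiableAt ℝ (coordGrad f) u := by
  have h : DifferentiableAt ℝ (fderiv ℝ f) u :=
    (hf.fderiv_right (m := 1) (by norm_num)).differentiableAt one_ne_zero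
  exact differentiableAt_pi.2 fun i => h.clm_apply (differentiableAt_const _)

lemma coordGrad_dotProduct (hθ : DifferentiableAt ℝ θ u) (hψ : DifferentiableAt ℝ ψ u) :
    coordGrad (fun v => θ v ⬝ᵥ ψ v) u =
      θ u ᵥ* coordJacobian ψ u + ψ u ᵥ* coordJacobian θ u := by
  have hθ' := differentiableAt_pi.1 hθ
  have hψ' := differentiableAt_pi.1 hψ
  ext i
  simp only [coordGrad, pd, dotProduct, coordJacobian, Pi.add_apply, vecMul, of_apply]
  rw [fderiv_fun_sum fun m _ => (hθ' m).fun_mul (hψ' m), _root_.sum_apply,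
    ← Finset.sum_add_distrib]
  refine Finset.sum_congr rfl fun m _ => ?_
  rw [fderiv_fun_mul (hθ' m) (hψ' m)]
  rfl

lemma hasFDerivAt_affine (b : Fin 4 → ℝ) (A : Matrix (Fin 4) (Fin 4) ℝ) (u : Fin 4 → ℝ) :
    HasFDerivAt (fun v => b + A *ᵥ v) (LinearMap.toContinuousLinearMap A.mulVecLin) u :=
  (LinearMap.toContinuousLinearMap A.mulVecLin).hasFDerivAt.const_add b

lemma coordJacobian_affine (b : Fin 4 → ℝ) (A : Matrix (Fin 4) (Fin 4) ℝ) (u : Fin 4 → ℝ) :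
    coordJacobian (fun v => b + A *ᵥ v) u = A := by
  ext i j
  have h := hasFDerivAt_pi'.1 (hasFDerivAt_affine b A u) i
  rw [coordJacobian, of_apply, pd, h.fderiv]
  simp

lemma coordJacobian_id (u : Fin 4 → ℝ) : coordJacobian (fun v => v) u = 1 := by
  simpa using coordJacobian_affine 0 1 u

end CoordinateCalculus

section ConformallyFlat

variable {η : Matrix (Fin 4) (Fin 4) ℝ} {D L : (Fin 4 → ℝ) → ℝ} {u : Fin 4 → ℝ}

lemma christoffel_congr {g h : (Fin 4 → ℝ) → Matrix (Fin 4) (Fin 4) ℝ}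
    (hgh : g =ᶠ[𝓝 u] h) (k i j : Fin 4) : christoffel g k i j =ᶠ[𝓝 u] christoffel h k i j := by
  have hpd (n a b : Fin 4) : pd n (fun v => g v a b) =ᶠ[𝓝 u] pd n (fun v => h v a b) :=
    pd_congr (hgh.mono fun v hv => by simp only [hv]) n
  have hpd' : ∀ᶠ v in 𝓝 u, ∀ n a b, pd n (fun v => g v a b) v = pd n (fun v => h v a b) v := by
    simpa only [eventually_all] using! hpd
  filter_upwards [hgh, hpd'] with v hv hv'
  simp only [christoffel, hv, hv']

lemma scalarCurv_congr {g h : (Fin 4 → ℝ) → Matrix (Fin 4) (Fin 4) ℝ}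
    (hgh : g =ᶠ[𝓝 u] h) : scalarCurv g u = scalarCurv h u := by
  simp only [scalarCurv, ricci, riemann, hgh.eq_of_nhds,
    fun k i j => (christoffel_congr hgh k i j).eq_of_nhds,
    fun n k i j => (pd_congr (christoffel_congr hgh k i j) n).eq_of_nhds]

/-- The covector `½ d log |D|`: the differential of `φ` when `D = ± e^{2φ}`. -/
noncomputable def conformalForm (D : (Fin 4 → ℝ) → ℝ) (u : Fin 4 → ℝ) : Fin 4 → ℝ :=
  (2 * D u)⁻¹ • coordGrad D u

lemma christoffel_smul (hη : η.IsSymm) (hdet : IsUnit η.det) (hD : D u ≠ 0) (k i j : Fin 4) :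
    christoffel (fun v => D v • η) k i j u = conformalSymbol η k i j (conformalForm D u) := by
  have hpd (n a b : Fin 4) : pd n (fun v => (D v • η) a b) u = pd n D u * η a b := by
    simp only [pd, Matrix.smul_apply, smul_eq_mul, mul_comm _ (η a b)]
    exact DFunLike.congr_fun (congrFun (fderiv_const_smul_field (f := D) (η a b)) u) _
  have hinv : (D u • η)⁻¹ = (D u)⁻¹ • η⁻¹ := inv_smul' η (Units.mk0 _ hD) hdet
  have hone (k j : Fin 4) : ∑ l, η⁻¹ k l * η j l = (1 : Matrix _ _ ℝ) k j := by
    simp only [← nonsing_inv_mul η hdet, mul_apply, hη.apply j]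
  have hterm (l : Fin 4) : (D u)⁻¹ * η⁻¹ k l *
      (pd i D u * η j l + pd j D u * η i l - pd l D u * η i j) =
      (D u)⁻¹ * (pd i D u * (η⁻¹ k l * η j l) + pd j D u * (η⁻¹ k l * η i l)
        - η i j * (η⁻¹ k l * coordGrad D u l)) := by
    rw [coordGrad]
    ring
  simp only [christoffel, hpd]
  simp only [hinv, Matrix.smul_apply, smul_eq_mul, hterm, ← Finset.mul_sum,
    Finset.sum_sub_distrib, Finset.sum_add_distrib, hone]
  rw [conformalSymbol_apply, conformalForm, mulVec_smul]
  simp only [Pi.smul_apply, smul_eq_mul, mulVec, dotProduct, coordGrad]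
  ring

lemma pd_christoffel_smul (hη : η.IsSymm) (hdet : IsUnit η.det) (hD : D u ≠ 0)
    (hDc : ContinuousAt D u) (hθ : DifferentiableAt ℝ (conformalForm D) u) (n k i j : Fin 4) :
    pd n (christoffel (fun v => D v • η) k i j) u =
      conformalSymbol η k i j ((coordJacobian (conformalForm D) u).col n) := by
  have h : christoffel (fun v => D v • η) k i j =ᶠ[𝓝 u]
      fun v => conformalSymbol η k i j (conformalForm D v) :=
    (hDc.eventually_ne hD).mono fun v hv => christoffel_smul hη hdet hv k i j
  rw [(pd_congr h n).eq_of_nhds, pd_linearMap_comp hθ]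

lemma ricci_smul (hη : η.IsSymm) (hdet : IsUnit η.det) (hD : D u ≠ 0)
    (hDc : ContinuousAt D u) (hθ : DifferentiableAt ℝ (conformalForm D) u) (i k : Fin 4) :
    ricci (fun v => D v • η) i k u =
      coordJacobian (conformalForm D) u k i - 3 * coordJacobian (conformalForm D) u i k +
        2 * (conformalForm D u i * conformalForm D u k) -
        ((η⁻¹ * coordJacobian (conformalForm D) u).trace +
          2 * (conformalForm D u ⬝ᵥ η⁻¹ *ᵥ conformalForm D u)) * η i k := by
  set θ := conformalForm D u
  set J := coordJacobian (conformalForm D) u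
  have hquad : ∑ l, ∑ m, conformalSymbol η l l m θ * conformalSymbol η m i k θ =
      4 * (2 * (θ i * θ k) - η i k * (θ ⬝ᵥ η⁻¹ *ᵥ θ)) := by
    rw [Finset.sum_comm]
    simp only [← Finset.sum_mul, conformalSymbol_symm hη _ _ _ θ, sum_conformalSymbol_trace hdet]
    rw [← sum_conformalSymbol_mul, Finset.mul_sum]
    simp [mul_assoc]
  simp only [ricci, riemann, christoffel_smul hη hdet hD, pd_christoffel_smul hη hdet hD hDc hθ,
    Finset.sum_sub_distrib, Finset.sum_add_distrib]
  rw [sum_conformalSymbol_divergence, sum_conformalSymbol_trace hdet, hquad,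
    sum_conformalSymbol_mul_conformalSymbol hη hdet]
  simp only [col_apply, Fintype.card_fin]
  push_cast
  ring

lemma scalarCurv_smul (hη : η.IsSymm) (hdet : IsUnit η.det) (hD : D u ≠ 0)
    (hDc : ContinuousAt D u) (hθ : DifferentiableAt ℝ (conformalForm D) u) :
    scalarCurv (fun v => D v • η) u =
      -6 / D u * ((η⁻¹ * coordJacobian (conformalForm D) u).trace +
        conformalForm D u ⬝ᵥ η⁻¹ *ᵥ conformalForm D u) := by
  set θ := conformalForm D u
  set J := coordJacobian (conformalForm D) u
  have hinv : (D u • η)⁻¹ = (D u)⁻¹ • η⁻¹ := inv_smul' η (Units.mk0 _ hD) hdet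
  have hricci : (of fun i k => ricci (fun v => D v • η) i k u) =
      Jᵀ - (3 : ℝ) • J + (2 : ℝ) • vecMulVec θ θ -
        ((η⁻¹ * J).trace + 2 * (θ ⬝ᵥ η⁻¹ *ᵥ θ)) • η := by
    ext i k
    exact ricci_smul hη hdet hD hDc hθ i k
  have htrace_transpose : (η⁻¹ * Jᵀ).trace = (η⁻¹ * J).trace := by
    rw [← trace_transpose, transpose_mul, transpose_transpose, hη.inv.eq, trace_mul_comm]
  have htrace_metric : (η⁻¹ * η).trace = 4 := by
    rw [nonsing_inv_mul η hdet, trace_one]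
    simp
  change ((D u • η)⁻¹ * (of fun i k => ricci (fun v => D v • η) i k u)ᵀ).trace = _
  rw [hinv, Matrix.smul_mul, trace_smul, hricci]
  simp only [transpose_add, transpose_sub, transpose_smul, transpose_transpose,
    transpose_vecMulVec, hη.eq, Matrix.mul_add, Matrix.mul_sub, Matrix.mul_smul, trace_add,
    trace_sub, trace_smul, mul_vecMulVec, trace_vecMulVec, htrace_transpose, htrace_metric,
    smul_eq_mul, dotProduct_comm (η⁻¹ *ᵥ θ)]
  ring

lemma conformalForm_inv_sq (hL : DifferentiableAt ℝ L u) (h0 : L u ≠ 0) :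
    conformalForm (fun v => (L v ^ 2)⁻¹) u = -(L u)⁻¹ • coordGrad L u := by
  have hφ : HasDerivAt (fun x : ℝ => (x ^ 2)⁻¹) (-2 / L u ^ 3) (L u) := by
    refine ((hasDerivAt_pow 2 (L u)).fun_inv (pow_ne_zero 2 h0)).congr_deriv ?_
    push_cast
    field_simp
  rw [conformalForm, coordGrad_comp hφ hL, smul_smul]
  congr 1
  field_simp

lemma conformalForm_inv_sq_eventuallyEq (hL : ContDiffAt ℝ 2 L u) (h0 : L u ≠ 0) :
    conformalForm (fun v => (L v ^ 2)⁻¹) =ᶠ[𝓝 u] fun v => -(L v)⁻¹ • coordGrad L v := by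
  filter_upwards [hL.eventually (by simp), hL.continuousAt.eventually_ne h0] with v hv hv0
  exact conformalForm_inv_sq (hv.differentiableAt two_ne_zero) hv0

lemma differentiableAt_conformalForm_inv_sq (hL : ContDiffAt ℝ 2 L u) (h0 : L u ≠ 0) :
    DifferentiableAt ℝ (conformalForm fun v => (L v ^ 2)⁻¹) u :=
  (((hL.differentiableAt two_ne_zero).inv h0).neg.smul
    (differentiableAt_coordGrad hL)).congr_of_eventuallyEq
      (conformalForm_inv_sq_eventuallyEq hL h0)

lemma coordJacobian_conformalForm_inv_sq (hL : ContDiffAt ℝ 2 L u) (h0 : L u ≠ 0) :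
    coordJacobian (conformalForm fun v => (L v ^ 2)⁻¹) u =
      -(L u)⁻¹ • coordJacobian (coordGrad L) u +
        (L u ^ 2)⁻¹ • vecMulVec (coordGrad L u) (coordGrad L u) := by
  have hd : DifferentiableAt ℝ L u := hL.differentiableAt two_ne_zero
  have hinv : DifferentiableAt ℝ (fun v => -(L v)⁻¹) u := (hd.inv h0).neg
  have hderiv : HasDerivAt (fun x : ℝ => -x⁻¹) (L u ^ 2)⁻¹ (L u) := by
    simpa using (hasDerivAt_inv h0).fun_neg
  rw [coordJacobian_congr (conformalForm_inv_sq_eventuallyEq hL h0),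
    coordJacobian_smul hinv (differentiableAt_coordGrad hL), coordGrad_comp hderiv hd,
    vecMulVec_smul]

lemma scalarCurv_inv_sq_smul (hη : η.IsSymm) (hdet : IsUnit η.det) (hL : ContDiffAt ℝ 2 L u)
    (h0 : L u ≠ 0) :
    scalarCurv (fun v => (L v ^ 2)⁻¹ • η) u =
      6 * L u * (η⁻¹ * coordJacobian (coordGrad L) u).trace -
        12 * (coordGrad L u ⬝ᵥ η⁻¹ *ᵥ coordGrad L u) := by
  have hsq : L u ^ 2 ≠ 0 := pow_ne_zero 2 h0
  rw [scalarCurv_smul (D := fun v => (L v ^ 2)⁻¹) hη hdet (inv_ne_zero hsq)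
      ((hL.continuousAt.pow 2).inv₀ hsq)
      (differentiableAt_conformalForm_inv_sq hL h0),
    coordJacobian_conformalForm_inv_sq hL h0,
    conformalForm_inv_sq (hL.differentiableAt two_ne_zero) h0]
  simp only [Matrix.mul_add, Matrix.mul_smul, trace_add, trace_smul, mul_vecMulVec,
    trace_vecMulVec, mulVec_smul, dotProduct_smul, smul_dotProduct, smul_eq_mul,
    dotProduct_comm (η⁻¹ *ᵥ _)]
  field_simp
  ring

end ConformallyFlat

section Quadric

variable {η : Matrix (Fin 4) (Fin 4) ℝ} {u : Fin 4 → ℝ}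

/-- The quadratic polynomials whose Hessian is the multiple `k η` of the metric `η`, with
value `c` and differential `b` at the origin. -/
noncomputable def metricQuadric (η : Matrix (Fin 4) (Fin 4) ℝ) (c : ℝ) (b : Fin 4 → ℝ) (k : ℝ)
    (v : Fin 4 → ℝ) : ℝ :=
  c + b ⬝ᵥ v + k / 2 * (v ⬝ᵥ η *ᵥ v)

lemma contDiff_metricQuadric {n : WithTop ℕ∞} (c : ℝ) (b : Fin 4 → ℝ) (k : ℝ) :
    ContDiff ℝ n (metricQuadric η c b k) := by
  unfold metricQuadric dotProduct mulVec dotProduct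
  fun_prop

lemma coordGrad_metricQuadric (hη : η.IsSymm) (c : ℝ) (b : Fin 4 → ℝ) (k : ℝ) :
    coordGrad (metricQuadric η c b k) = fun v => b + (k • η) *ᵥ v := by
  have hsplit : metricQuadric η c b k =
      fun v => (v ⬝ᵥ (b + ((k / 2) • η) *ᵥ v)) + c := by
    ext v
    simp only [metricQuadric, dotProduct_add, smul_mulVec, dotProduct_smul, smul_eq_mul,
      dotProduct_comm v b]
    ring
  have hshift (f : (Fin 4 → ℝ) → ℝ) : coordGrad (fun v => f v + c) = coordGrad f := by
    ext v i
    rw [coordGrad, coordGrad, pd, pd, fderiv_add_const]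
  rw [hsplit, hshift]
  ext1 v
  rw [coordGrad_dotProduct differentiableAt_fun_id (hasFDerivAt_affine b _ v).differentiableAt,
    coordJacobian_affine, coordJacobian_id, vecMul_one, ← mulVec_transpose, transpose_smul, hη.eq]
  simp only [smul_mulVec]
  module

lemma scalarCurv_metricQuadric (hη : η.IsSymm) (hdet : IsUnit η.det) {c k : ℝ} {b : Fin 4 → ℝ}
    (h0 : metricQuadric η c b k u ≠ 0) :
    scalarCurv (fun v => (metricQuadric η c b k v ^ 2)⁻¹ • η) u =
      24 * (c * k) - 12 * (b ⬝ᵥ η⁻¹ *ᵥ b) := by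
  have htrace : (η⁻¹ * (k • η)).trace = 4 * k := by
    rw [Matrix.mul_smul, nonsing_inv_mul η hdet, trace_smul, trace_one]
    simp [mul_comm]
  have hsharp : η⁻¹ *ᵥ (b + (k • η) *ᵥ u) = η⁻¹ *ᵥ b + k • u := by
    rw [mulVec_add, mulVec_mulVec, Matrix.mul_smul, nonsing_inv_mul η hdet, smul_mulVec,
      one_mulVec]
  have hcross : (η *ᵥ u) ⬝ᵥ (η⁻¹ *ᵥ b) = b ⬝ᵥ u := by
    rw [← vecMul_transpose, hη.eq, ← dotProduct_mulVec, mulVec_mulVec, mul_nonsing_inv η hdet,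
      one_mulVec, dotProduct_comm]
  rw [scalarCurv_inv_sq_smul hη hdet (contDiff_metricQuadric c b k).contDiffAt h0,
    coordGrad_metricQuadric hη, coordJacobian_affine, htrace, hsharp, metricQuadric]
  simp only [add_dotProduct, dotProduct_add, smul_mulVec, smul_dotProduct, dotProduct_smul,
    smul_eq_mul, hcross, dotProduct_comm (η *ᵥ u) u]
  ring

end Quadric

/-- The constant metric `2 (dx dp + dy dq)`, of signature `(2, 2)`, to which every `G_D` is
conformal. -/
def neutralForm : Matrix (Fin 4) (Fin 4) ℝ :=
  !![0, 0, 1, 0;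
     0, 0, 0, 1;
     1, 0, 0, 0;
     0, 1, 0, 0]

lemma neutralForm_isSymm : neutralForm.IsSymm := by
  ext i j
  fin_cases i <;> fin_cases j <;> rfl

lemma neutralForm_mul_self : neutralForm * neutralForm = 1 := by
  ext i j
  fin_cases i <;> fin_cases j <;> simp [neutralForm]

lemma isUnit_det_neutralForm : IsUnit neutralForm.det :=
  isUnit_det_of_left_inverse neutralForm_mul_self

lemma GD_eq_smul (D : (Fin 4 → ℝ) → ℝ) (u : Fin 4 → ℝ) : GD D u = D u • neutralForm := by
  ext i j
  fin_cases i <;> fin_cases j <;> simp [GD, neutralForm]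

lemma metricQuadric_neutralForm (c₁ c₂ c₃ c₄ c₅ c₆ : ℝ) :
    metricQuadric neutralForm c₁ ![c₂, c₃, c₄, c₅] c₆ =
      fun u => c₁ + c₂ * u 0 + c₃ * u 1 + c₄ * u 2 + c₅ * u 3 +
        c₆ * (u 0 * u 2 + u 1 * u 3) := by
  ext u
  simp only [metricQuadric, dotProduct, Fin.sum_univ_four, Fin.isValue, cons_val_zero,
    cons_val_one, cons_val, mulVec, neutralForm, of_apply, cons_val', cons_val_fin_one, zero_mul,
    add_zero, one_mul, zero_add]
  ring

lemma dotProduct_neutralForm_inv_mulVec (c₂ c₃ c₄ c₅ : ℝ) :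
    ![c₂, c₃, c₄, c₅] ⬝ᵥ neutralForm⁻¹ *ᵥ ![c₂, c₃, c₄, c₅] = 2 * (c₂ * c₄ + c₃ * c₅) := by
  rw [inv_eq_left_inv neutralForm_mul_self]
  simp only [dotProduct, Nat.succ_eq_add_one, Nat.reduceAdd, mulVec, neutralForm, of_apply,
    cons_val', cons_val_fin_one, Fin.sum_univ_four, Fin.isValue, cons_val_zero, cons_val_one,
    cons_val, zero_mul, add_zero, one_mul, zero_add]
  ring

/-- For `D = L⁻²` with `L(x,y,p,q) = c₁ + c₂x + c₃y + c₄p + c₅q + c₆(xp + yq)` nowhere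
zero on a nonempty open set `U`, the scalar curvature of the reduced Lychagin–Rubtsov
metric `G_D` is the constant `±24 (c₂c₄ + c₃c₅ − c₁c₆)` on `U`; in particular it
vanishes identically on `U` iff `c₂c₄ + c₃c₅ − c₁c₆ = 0`.
Coordinates: `x = u 0`, `y = u 1`, `p = u 2`, `q = u 3`. -/
theorem scalar_curvature_constant (c₁ c₂ c₃ c₄ c₅ c₆ : ℝ)
    (L : (Fin 4 → ℝ) → ℝ)
    (hL : L = fun u => c₁ + c₂ * u 0 + c₃ * u 1 + c₄ * u 2 + c₅ * u 3 +
      c₆ * (u 0 * u 2 + u 1 * u 3))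
    (U : Set (Fin 4 → ℝ)) (hU : IsOpen U) (hUne : U.Nonempty)
    (hL0 : ∀ u ∈ U, L u ≠ 0)
    (D : (Fin 4 → ℝ) → ℝ) (hD : ∀ u ∈ U, D u = ((L u) ^ 2)⁻¹) :
    ((∀ u ∈ U, scalarCurv (GD D) u = -24 * (c₂ * c₄ + c₃ * c₅ - c₁ * c₆)) ∨
      (∀ u ∈ U, scalarCurv (GD D) u = 24 * (c₂ * c₄ + c₃ * c₅ - c₁ * c₆))) ∧
    ((∀ u ∈ U, scalarCurv (GD D) u = 0) ↔ c₂ * c₄ + c₃ * c₅ - c₁ * c₆ = 0) := by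
  have hcurv : ∀ u ∈ U, scalarCurv (GD D) u = -24 * (c₂ * c₄ + c₃ * c₅ - c₁ * c₆) := by
    intro u hu
    rw [← metricQuadric_neutralForm] at hL
    subst hL
    have hGD : GD D =ᶠ[𝓝 u] fun v =>
        (metricQuadric neutralForm c₁ ![c₂, c₃, c₄, c₅] c₆ v ^ 2)⁻¹ • neutralForm := by
      filter_upwards [hU.mem_nhds hu] with v hv
      rw [GD_eq_smul, hD v hv]
    rw [scalarCurv_congr hGD,
      scalarCurv_metricQuadric neutralForm_isSymm isUnit_det_neutralForm (hL0 u hu),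
      dotProduct_neutralForm_inv_mulVec]
    ring
  refine ⟨Or.inl hcurv, fun hzero => ?_, fun hzero u hu => by rw [hcurv u hu, hzero, mul_zero]⟩
  obtain ⟨u, hu⟩ := hUne
  linarith [hcurv u hu, hzero u hu]
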